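/- For all α, β ∈ (0, π/2), the size-7 family T₇ is not a UPB for any of the three bipartite 4×4 groupings AB:CD, AC:BD, AD:BC: there exist nonzero product vectors of each of the forms (i,j,k,l) ↦ u (i,j) · w (k,l), (i,j,k,l) ↦ u (i,k) · w (j,l), and (i,j,k,l) ↦ u (i,l) · w (j,k) (with u, w : Fin 2 × Fin 2 → ℂ), each orthogonal to all seven members of T₇. -/

import Mathlib

/-- The 4-qubit index type. -/
abbrev Q4 : Type := Fin 2 × Fin 2 × Fin 2 × Fin 2

/-- The standard inner product on the 4-qubit space `Q4 → ℂ`. -/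
noncomputable def ip (v w : Q4 → ℂ) : ℂ := ∑ x, (starRingEnd ℂ) (v x) * w x

/-- The 4-qubit product vector `|x,y,z,w⟩`. -/
def pv (x y z w : Fin 2 → ℂ) : Q4 → ℂ := fun p => x p.1 * y p.2.1 * z p.2.2.1 * w p.2.2.2

/-- `|0⟩`. -/
def ket0 : Fin 2 → ℂ := ![1, 0]

/-- `|1⟩`. -/
def ket1 : Fin 2 → ℂ := ![0, 1]

/-- `(cos t, sin t)` as a qubit state. -/
noncomputable def vk (t : ℝ) : Fin 2 → ℂ := ![(Real.cos t : ℂ), (Real.sin t : ℂ)]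

/-- `(sin t, −cos t)` as a qubit state, orthogonal to `vk t`. -/
noncomputable def vk' (t : ℝ) : Fin 2 → ℂ := ![(Real.sin t : ℂ), -(Real.cos t : ℂ)]

/-- The 4-qubit UPB of size 7:
`{|0,0,0,0⟩, |0,a,a,1⟩, |0,a',1,a⟩, |1,0,0,b⟩, |1,a',a,b'⟩, |a,a,1,0⟩, |a',1,a',a'⟩}`. -/
noncomputable def T7 (α β : ℝ) : Fin 7 → Q4 → ℂ :=
  ![pv ket0 ket0 ket0 ket0,
    pv ket0 (vk α) (vk α) ket1,
    pv ket0 (vk' α) ket1 (vk α),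
    pv ket1 ket0 ket0 (vk β),
    pv ket1 (vk' α) (vk α) (vk' β),
    pv (vk α) (vk α) ket1 ket0,
    pv (vk' α) ket1 (vk' α) (vk' α)]

/-!
Three members of `T₇` have `|0⟩` on the first qubit, so `|1⟩` there annihilates them. In a grouping
that pairs the first qubit with a qubit `X`, let `u = |1⟩ ⊗ y`, where the state `y ≠ 0` of `X` is
orthogonal to the factor of the fourth member on `X`. The vector `u` disposes of four members; the
other three cannot span the four-dimensional space of the remaining two qubits, so some `w ≠ 0`
there is orthogonal to them, and `u ⊗ w` is orthogonal to all seven.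
-/

section Tensor

open Matrix

variable {R m n : Type*}

/-- The tensor product `x ⊗ y` of two coordinate vectors, as a vector on the product of the index
types. For two-qubit vectors it is `|x, y⟩`. -/
def tensor [Mul R] (x : m → R) (y : n → R) : m × n → R := fun p => x p.1 * y p.2

theorem tensor_ne_zero [MulZeroClass R] [NoZeroDivisors R] {x : m → R} {y : n → R} (hx : x ≠ 0)
    (hy : y ≠ 0) : tensor x y ≠ 0 := by
  obtain ⟨i, hi⟩ := Function.ne_iff.1 hx
  obtain ⟨j, hj⟩ := Function.ne_iff.1 hy
  exact Function.ne_iff.2 ⟨(i, j), mul_ne_zero hi hj⟩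

theorem star_tensor_dotProduct_tensor [CommSemiring R] [StarMul R] [Fintype m] [Fintype n]
    (x u : m → R) (y w : n → R) :
    star (tensor x y) ⬝ᵥ tensor u w = (star x ⬝ᵥ u) * (star y ⬝ᵥ w) := by
  simp only [dotProduct, tensor, Pi.star_apply, star_mul', Fintype.sum_mul_sum,
    Fintype.sum_prod_type, mul_mul_mul_comm]

end Tensor

section Orthogonality

open Finset Matrix

variable {𝕜 ι l m n : Type*} [Field 𝕜] [StarMul 𝕜] [Fintype l] [Fintype m] [Fintype n]

theorem exists_ne_zero_forall_mem_star_dotProduct_eq_zero (v : ι → n → 𝕜) {s : Finset ι}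
    (hs : #s < Fintype.card n) : ∃ w ≠ 0, ∀ t ∈ s, star (v t) ⬝ᵥ w = 0 := by
  let M : Matrix s n 𝕜 := .of fun t => star (v t)
  have hker : LinearMap.ker M.mulVecLin ≠ ⊥ :=
    LinearMap.ker_ne_bot_of_finrank_lt (by simpa using hs)
  obtain ⟨w, hw, hw0⟩ := Submodule.exists_mem_ne_zero_of_ne_bot hker
  exact ⟨w, hw0, fun t ht => congrFun hw ⟨t, ht⟩⟩

theorem exists_tensor_orthogonal_of_forall_or_mem {p : ι → m → 𝕜} (q : ι → n → 𝕜) {u : m → 𝕜}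
    {s : Finset ι} (hu : u ≠ 0) (hs : #s < Fintype.card n)
    (h : ∀ t, star (p t) ⬝ᵥ u = 0 ∨ t ∈ s) :
    ∃ w, tensor u w ≠ 0 ∧ ∀ t, star (tensor (p t) (q t)) ⬝ᵥ tensor u w = 0 := by
  obtain ⟨w, hw, hqw⟩ := exists_ne_zero_forall_mem_star_dotProduct_eq_zero q hs
  refine ⟨w, tensor_ne_zero hu hw, fun t => ?_⟩
  rw [star_tensor_dotProduct_tensor]
  exact mul_eq_zero.2 ((h t).imp_right (hqw t))

theorem exists_tensor_orthogonal_of_forall_or_mem_or_mem {x : ι → l → 𝕜} (y : ι → m → 𝕜)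
    (q : ι → n → 𝕜) {a : l → 𝕜} {r s : Finset ι} (ha : a ≠ 0) (hr : #r < Fintype.card m)
    (hs : #s < Fintype.card n) (h : ∀ t, star (x t) ⬝ᵥ a = 0 ∨ t ∈ r ∨ t ∈ s) :
    ∃ u w, tensor u w ≠ 0 ∧ ∀ t, star (tensor (tensor (x t) (y t)) (q t)) ⬝ᵥ tensor u w = 0 := by
  obtain ⟨b, hb, hyb⟩ := exists_ne_zero_forall_mem_star_dotProduct_eq_zero y hr
  refine ⟨tensor a b, exists_tensor_orthogonal_of_forall_or_mem q (tensor_ne_zero ha hb) hs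
    fun t => ?_⟩
  rw [star_tensor_dotProduct_tensor, mul_eq_zero, or_assoc]
  exact (h t).imp_right (Or.imp_left (hyb t))

end Orthogonality

section FourQubits

open Finset Matrix

/-- The bipartite grouping `AB:CD` of the four qubits, as a regrouping of indices. -/
def groupABCD : Q4 ≃ (Fin 2 × Fin 2) × (Fin 2 × Fin 2) where
  toFun p := ((p.1, p.2.1), (p.2.2.1, p.2.2.2))
  invFun q := (q.1.1, q.1.2, q.2.1, q.2.2)

/-- The bipartite grouping `AC:BD` of the four qubits, as a regrouping of indices. -/
def groupACBD : Q4 ≃ (Fin 2 × Fin 2) × (Fin 2 × Fin 2) where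
  toFun p := ((p.1, p.2.2.1), (p.2.1, p.2.2.2))
  invFun q := (q.1.1, q.2.1, q.1.2, q.2.2)

/-- The bipartite grouping `AD:BC` of the four qubits, as a regrouping of indices. -/
def groupADBC : Q4 ≃ (Fin 2 × Fin 2) × (Fin 2 × Fin 2) where
  toFun p := ((p.1, p.2.2.2), (p.2.1, p.2.2.1))
  invFun q := (q.1.1, q.2.1, q.2.2, q.1.2)

theorem pv_eq_tensor_comp_groupABCD (x y z w : Fin 2 → ℂ) :
    pv x y z w = tensor (tensor x y) (tensor z w) ∘ groupABCD := by
  funext p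
  simp only [pv, tensor, groupABCD, Equiv.coe_fn_mk, Function.comp_apply]
  ring

theorem pv_eq_tensor_comp_groupACBD (x y z w : Fin 2 → ℂ) :
    pv x y z w = tensor (tensor x z) (tensor y w) ∘ groupACBD := by
  funext p
  simp only [pv, tensor, groupACBD, Equiv.coe_fn_mk, Function.comp_apply]
  ring

theorem pv_eq_tensor_comp_groupADBC (x y z w : Fin 2 → ℂ) :
    pv x y z w = tensor (tensor x w) (tensor y z) ∘ groupADBC := by
  funext p
  simp only [pv, tensor, groupADBC, Equiv.coe_fn_mk, Function.comp_apply]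
  ring

theorem ip_comp_equiv {n : Type*} [Fintype n] (e : Q4 ≃ n) (v w : n → ℂ) :
    ip (v ∘ e) (w ∘ e) = star v ⬝ᵥ w :=
  e.sum_comp fun i => star (v i) * w i

theorem exists_tensor_comp_orthogonal {ι l m n : Type*} [Fintype l] [Fintype m] [Fintype n]
    (e : Q4 ≃ (l × m) × n) {v : ι → Q4 → ℂ} {x : ι → l → ℂ} {y : ι → m → ℂ} {q : ι → n → ℂ}
    (hv : ∀ t, v t = tensor (tensor (x t) (y t)) (q t) ∘ e) {a : l → ℂ} {r s : Finset ι}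
    (ha : a ≠ 0) (hr : #r < Fintype.card m) (hs : #s < Fintype.card n)
    (h : ∀ t, star (x t) ⬝ᵥ a = 0 ∨ t ∈ r ∨ t ∈ s) :
    ∃ u w, tensor u w ∘ e ≠ 0 ∧ ∀ t, ip (v t) (tensor u w ∘ e) = 0 := by
  obtain ⟨u, w, hne, horth⟩ := exists_tensor_orthogonal_of_forall_or_mem_or_mem y q ha hr hs h
  refine ⟨u, w, fun h0 => hne (e.surjective.injective_comp_right h0), fun t => ?_⟩
  rw [hv, ip_comp_equiv, horth]

/-- The one-qubit factors of the members of `T7 α β`: row `t` lists those of the member `t`, for the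
qubits `A`, `B`, `C`, `D` in this order. -/
noncomputable def T7Factor (α β : ℝ) : Fin 7 → Fin 4 → Fin 2 → ℂ :=
  ![![ket0, ket0, ket0, ket0],
    ![ket0, vk α, vk α, ket1],
    ![ket0, vk' α, ket1, vk α],
    ![ket1, ket0, ket0, vk β],
    ![ket1, vk' α, vk α, vk' β],
    ![vk α, vk α, ket1, ket0],
    ![vk' α, ket1, vk' α, vk' α]]

theorem T7_eq_pv (α β : ℝ) (t : Fin 7) :
    T7 α β t =
      pv (T7Factor α β t 0) (T7Factor α β t 1) (T7Factor α β t 2) (T7Factor α β t 3) := by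
  fin_cases t <;> rfl

theorem ket1_ne_zero : ket1 ≠ 0 := by
  simp [ket1]

theorem star_ket0_dotProduct_ket1 : star ket0 ⬝ᵥ ket1 = 0 := by
  simp [ket0, ket1, dotProduct]

theorem T7Factor_zero_orthogonal_ket1_or_mem (α β : ℝ) (t : Fin 7) :
    star (T7Factor α β t 0) ⬝ᵥ ket1 = 0 ∨ t ∈ ({3} : Finset (Fin 7)) ∨
      t ∈ ({4, 5, 6} : Finset (Fin 7)) := by
  fin_cases t
  all_goals first | exact .inl star_ket0_dotProduct_ket1 | exact .inr (by decide)

theorem exists_tensor_comp_orthogonal_T7 (α β : ℝ) (e : Q4 ≃ (Fin 2 × Fin 2) × (Fin 2 × Fin 2))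
    {i j k : Fin 4}
    (he : ∀ t, T7 α β t = tensor (tensor (T7Factor α β t 0) (T7Factor α β t i))
      (tensor (T7Factor α β t j) (T7Factor α β t k)) ∘ e) :
    ∃ u w, tensor u w ∘ e ≠ 0 ∧ ∀ t, ip (T7 α β t) (tensor u w ∘ e) = 0 :=
  exists_tensor_comp_orthogonal e he ket1_ne_zero (by simp) (by simp)
    (T7Factor_zero_orthogonal_ket1_or_mem α β)

end FourQubits

theorem stmt9_general (α β : ℝ) :
    (∃ u w : Fin 2 × Fin 2 → ℂ,
      (fun p : Q4 => u (p.1, p.2.1) * w (p.2.2.1, p.2.2.2)) ≠ 0 ∧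
      ∀ t, ip (T7 α β t) (fun p : Q4 => u (p.1, p.2.1) * w (p.2.2.1, p.2.2.2)) = 0) ∧
    (∃ u w : Fin 2 × Fin 2 → ℂ,
      (fun p : Q4 => u (p.1, p.2.2.1) * w (p.2.1, p.2.2.2)) ≠ 0 ∧
      ∀ t, ip (T7 α β t) (fun p : Q4 => u (p.1, p.2.2.1) * w (p.2.1, p.2.2.2)) = 0) ∧
    (∃ u w : Fin 2 × Fin 2 → ℂ,
      (fun p : Q4 => u (p.1, p.2.2.2) * w (p.2.1, p.2.2.1)) ≠ 0 ∧
      ∀ t, ip (T7 α β t) (fun p : Q4 => u (p.1, p.2.2.2) * w (p.2.1, p.2.2.1)) = 0) := by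
  refine ⟨?_, ?_, ?_⟩
  · exact exists_tensor_comp_orthogonal_T7 α β groupABCD fun t =>
      (T7_eq_pv α β t).trans (pv_eq_tensor_comp_groupABCD _ _ _ _)
  · exact exists_tensor_comp_orthogonal_T7 α β groupACBD fun t =>
      (T7_eq_pv α β t).trans (pv_eq_tensor_comp_groupACBD _ _ _ _)
  · exact exists_tensor_comp_orthogonal_T7 α β groupADBC fun t =>
      (T7_eq_pv α β t).trans (pv_eq_tensor_comp_groupADBC _ _ _ _)

/-- `T₇` is not a UPB for any of the bipartite `4 × 4` groupings `AB:CD`, `AC:BD`,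
`AD:BC`: for each there is a nonzero product vector of the corresponding form
orthogonal to all seven members. -/
theorem stmt9 (α β : ℝ) (hα : α ∈ Set.Ioo 0 (Real.pi / 2))
    (hβ : β ∈ Set.Ioo 0 (Real.pi / 2)) :
    (∃ u w : Fin 2 × Fin 2 → ℂ,
      (fun p : Q4 => u (p.1, p.2.1) * w (p.2.2.1, p.2.2.2)) ≠ 0 ∧
      ∀ t, ip (T7 α β t) (fun p : Q4 => u (p.1, p.2.1) * w (p.2.2.1, p.2.2.2)) = 0) ∧
    (∃ u w : Fin 2 × Fin 2 → ℂ,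
      (fun p : Q4 => u (p.1, p.2.2.1) * w (p.2.1, p.2.2.2)) ≠ 0 ∧
      ∀ t, ip (T7 α β t) (fun p : Q4 => u (p.1, p.2.2.1) * w (p.2.1, p.2.2.2)) = 0) ∧
    (∃ u w : Fin 2 × Fin 2 → ℂ,
      (fun p : Q4 => u (p.1, p.2.2.2) * w (p.2.1, p.2.2.1)) ≠ 0 ∧
      ∀ t, ip (T7 α β t) (fun p : Q4 => u (p.1, p.2.2.2) * w (p.2.1, p.2.2.1)) = 0) :=
  stmt9_general α β
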